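/- arXiv:1907.09405 — 2 statements merged into one kernel-verified Lean document; each statement's English description precedes it below -/
import Mathlib

section
/- With high probability there do not exist a color i ∈ [q] and sets S ⊆ A, T ⊆ B with |S|, |T| ≥ βn such that more than γ_d·n/log n vertices of T have no c_i-neighbor in S, where γ_d = (4/α_i)·log(e/β). -/
open MeasureTheory Filter Finset Asymptotics

/-- Discrete measurable structure on edge states: `none` = non-edge, `some i` = edge of color `cᵢ`. -/
instance (q : ℕ) : MeasurableSpace (Option (Fin q)) := ⊤

/-- Distribution of the state of a single pair: non-edge with probability `1-p`,
an edge of color `cᵢ` with probability `αᵢ·p`. -/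
noncomputable def colorM (q : ℕ) (α : Fin q → ℝ) (p : ℝ) : Measure (Option (Fin q)) :=
  ENNReal.ofReal (1 - p) • Measure.dirac none +
    ∑ i : Fin q, ENNReal.ofReal (α i * p) • Measure.dirac (some i)

/-- The randomly colored random bipartite graph on parts `A = B = Fin n`:
independently, each pair `(a,b)` is a non-edge with probability `1-p` and an
edge of color `cᵢ` with probability `αᵢ·p`.  A sample is a function
`f : Fin n × Fin n → Option (Fin q)`. -/
noncomputable def graphM (n q : ℕ) (α : Fin q → ℝ) (p : ℝ) :
    Measure (Fin n × Fin n → Option (Fin q)) :=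
  Measure.pi fun _ => colorM q α p

lemma colorM_prob (q : ℕ) (α : Fin q → ℝ) (hα : ∀ i, 0 < α i) (hsum : ∑ i, α i = 1)
    (p : ℝ) (h0 : 0 ≤ p) (h1 : p ≤ 1) : IsProbabilityMeasure (colorM q α p) := by
  constructor
  unfold colorM
  simp only [Measure.coe_add, Measure.coe_smul, Pi.add_apply, Pi.smul_apply, measure_univ,
    Measure.coe_finsetSum, Finset.sum_apply, smul_eq_mul, mul_one]
  rw [← ENNReal.ofReal_sum_of_nonneg (fun i _ => mul_nonneg (hα i).le h0), ← Finset.sum_mul, hsum,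
    one_mul, ← ENNReal.ofReal_add (by linarith) h0]
  simp

lemma colorM_ne (q : ℕ) (α : Fin q → ℝ) (hα : ∀ i, 0 < α i) (hsum : ∑ i, α i = 1)
    (p : ℝ) (h0 : 0 ≤ p) (h1 : p ≤ 1) (i : Fin q) :
    colorM q α p {x | x ≠ some i} ≤ ENNReal.ofReal (Real.exp (-(α i * p))) := by
  have hP := colorM_prob q α hα hsum p h0 h1
  have hge : ENNReal.ofReal (α i * p) ≤ colorM q α p {some i} := by
    unfold colorM
    simp only [Measure.coe_add, Measure.coe_smul, Pi.add_apply, Pi.smul_apply,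
      Measure.coe_finsetSum, Finset.sum_apply, smul_eq_mul]
    refine le_trans ?_ le_add_self
    refine le_trans ?_ (Finset.single_le_sum
      (f := fun j => ENNReal.ofReal (α j * p) * (Measure.dirac (some j)) {some i})
      (fun _ _ => zero_le) (Finset.mem_univ i))
    simp
  have hset : {x : Option (Fin q) | x ≠ some i} = {some i}ᶜ := by ext; simp
  rw [hset, prob_compl_eq_one_sub (by trivial)]
  calc 1 - colorM q α p {some i} ≤ 1 - ENNReal.ofReal (α i * p) := tsub_le_tsub_left hge 1
    _ = ENNReal.ofReal (1 - α i * p) := by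
      rw [ENNReal.ofReal_sub _ (mul_nonneg (hα i).le h0), ENNReal.ofReal_one]
    _ ≤ _ := ENNReal.ofReal_le_ofReal (by have := Real.add_one_le_exp (-(α i * p)); linarith)

lemma graphM_ne (n q : ℕ) (α : Fin q → ℝ) (hα : ∀ i, 0 < α i) (hsum : ∑ i, α i = 1)
    (p : ℝ) (h0 : 0 ≤ p) (h1 : p ≤ 1) (i : Fin q) (E : Finset (Fin n × Fin n)) :
    graphM n q α p {f | ∀ e ∈ E, f e ≠ some i} ≤
      ENNReal.ofReal (Real.exp (-(α i * p * E.card))) := by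
  have hP := colorM_prob q α hα hsum p h0 h1
  have hset : {f : Fin n × Fin n → Option (Fin q) | ∀ e ∈ E, f e ≠ some i} =
      Set.pi Set.univ (fun e => if e ∈ E then {x | x ≠ some i} else Set.univ) := by
    ext f
    simp only [Set.mem_ofPred_eq, Set.mem_pi, Set.mem_univ, true_imp_iff]
    refine forall_congr' fun e => ?_
    by_cases h : e ∈ E <;> simp [h]
  unfold graphM
  rw [hset, Measure.pi_pi]
  calc ∏ e, colorM q α p (if e ∈ E then {x | x ≠ some i} else Set.univ)
      = ∏ e, (if e ∈ E then colorM q α p {x | x ≠ some i} else 1) := by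
        refine Finset.prod_congr rfl fun e _ => ?_
        split_ifs <;> simp
    _ = (colorM q α p {x | x ≠ some i}) ^ E.card := by
        rw [Finset.prod_ite_mem]; simp
    _ ≤ (ENNReal.ofReal (Real.exp (-(α i * p)))) ^ E.card := by
        gcongr; exact colorM_ne q α hα hsum p h0 h1 i
    _ = _ := by
        rw [← ENNReal.ofReal_pow (Real.exp_pos _).le, ← Real.exp_nat_mul]
        congr 2; ring

lemma choose_bd (n t s : ℕ) (β : ℝ) (hβ : 0 < β) (hβ1 : β ≤ 1) (hs : β * n ≤ s) (hts : t ≤ s) :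
    (n.choose t : ℝ) ≤ Real.exp (Real.log (Real.exp 1 / β) * s) := by
  have h1 : (n.choose t : ℝ) * β ^ t ≤ Real.exp s := by
    by_cases htn : t ≤ n
    · calc (n.choose t : ℝ) * β ^ t ≤ (β + 1) ^ n := by
            rw [add_pow]
            refine le_trans (le_of_eq ?_) (Finset.single_le_sum
              (f := fun m => β ^ m * 1 ^ (n - m) * (n.choose m : ℝ))
              (fun _ _ => by positivity) (Finset.mem_range.2 (Nat.lt_succ_of_le htn)))
            simp [mul_comm]
        _ ≤ (Real.exp β) ^ n := by gcongr; exact Real.add_one_le_exp β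
        _ = Real.exp (n * β) := by rw [Real.exp_nat_mul]
        _ ≤ _ := Real.exp_le_exp.2 (by linarith)
    · rw [Nat.choose_eq_zero_of_lt (by omega)]; simp; positivity
  have h2 : Real.exp (Real.log (Real.exp 1 / β) * s) = Real.exp s / β ^ s := by
    rw [mul_comm, Real.exp_nat_mul, Real.exp_log (by positivity), div_pow, ← Real.exp_nat_mul,
      mul_one]
  rw [h2, le_div_iff₀ (by positivity)]
  refine le_trans ?_ h1
  refine mul_le_mul_of_nonneg_left ?_ (Nat.cast_nonneg _)
  exact pow_le_pow_of_le_one hβ.le hβ1 hts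

lemma bad_bd (n q : ℕ) (α : Fin q → ℝ) (hα : ∀ i, 0 < α i) (hsum : ∑ i, α i = 1)
    (β : ℝ) (hβ : 0 < β) (hβ1 : β ≤ 1) (p : ℝ) (h0 : 0 ≤ p) (h1 : p ≤ 1)
    (hn : 0 < n) (hl : 0 < Real.log n) (hp : Real.log n / n ≤ p)
    (ht : ∀ i, ⌈4 / α i * Real.log (Real.exp 1 / β) * n / Real.log n⌉₊ ≤ ⌈β * n⌉₊) :
    graphM n q α p {f | ∃ (i : Fin q) (S T : Finset (Fin n)),
          β * n ≤ (S.card : ℝ) ∧ β * n ≤ (T.card : ℝ) ∧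
          4 / α i * Real.log (Real.exp 1 / β) * n / Real.log n <
            ((T.filter fun b => ∀ a ∈ S, f (a, b) ≠ some i).card : ℝ)} ≤
      ENNReal.ofReal (q * Real.exp (-(2 * β * n))) := by
  have hn' : (0:ℝ) < n := by exact_mod_cast hn
  set L := Real.log (Real.exp 1 / β) with hL
  have hL1 : 1 ≤ L := by
    rw [hL, Real.log_div (by positivity) hβ.ne', Real.log_exp]
    have := Real.log_nonpos hβ.le hβ1
    linarith
  set s := ⌈β * n⌉₊ with hs
  have hsβ : β * n ≤ s := Nat.le_ceil _
  set t : Fin q → ℕ := fun i => ⌈4 / α i * L * n / Real.log n⌉₊ with htdef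
  have hsub : {f : Fin n × Fin n → Option (Fin q) | ∃ (i : Fin q) (S T : Finset (Fin n)),
          β * n ≤ (S.card : ℝ) ∧ β * n ≤ (T.card : ℝ) ∧
          4 / α i * L * n / Real.log n <
            ((T.filter fun b => ∀ a ∈ S, f (a, b) ≠ some i).card : ℝ)} ⊆
      ⋃ i ∈ (Finset.univ : Finset (Fin q)),
      ⋃ P ∈ (powersetCard s (univ : Finset (Fin n)) ×ˢ powersetCard (t i) (univ : Finset (Fin n))),
        {f | ∀ e ∈ P.1 ×ˢ P.2, f e ≠ some i} := by
    rintro f ⟨i, S, T, hS, -, hT⟩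
    obtain ⟨S', hS', hS'c⟩ := Finset.exists_subset_card_eq (Nat.ceil_le.2 hS)
    obtain ⟨T', hT', hT'c⟩ := Finset.exists_subset_card_eq (Nat.ceil_le.2 hT.le)
    simp only [Set.mem_iUnion]
    refine ⟨i, Finset.mem_univ i, (S', T'), ?_, ?_⟩
    · simp [Finset.mem_powersetCard, hS'c, hT'c, hs, htdef]
    · rintro ⟨a, b⟩ he
      rw [Finset.mem_product] at he
      exact (Finset.mem_filter.1 (hT' he.2)).2 a (hS' he.1)
  refine (measure_mono hsub).trans ((measure_biUnion_finset_le _ _).trans ?_)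
  have hi : ∀ i : Fin q, graphM n q α p (⋃ P ∈ (powersetCard s (univ : Finset (Fin n)) ×ˢ
      powersetCard (t i) (univ : Finset (Fin n))),
        {f | ∀ e ∈ P.1 ×ˢ P.2, f e ≠ some i}) ≤ ENNReal.ofReal (Real.exp (-(2 * β * n))) := by
    intro i
    refine (measure_biUnion_finset_le _ _).trans ?_
    have hα' := hα i
    have hti : 4 / α i * L * n / Real.log n ≤ t i := Nat.le_ceil _
    have hkey : 4 * L * s ≤ α i * p * (s * t i) := by
      calc 4 * L * s = α i * (Real.log n / n) * (s * (4 / α i * L * n / Real.log n)) := by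
            field_simp
        _ ≤ _ := by gcongr
    calc _ ≤ ∑ P ∈ (powersetCard s (univ : Finset (Fin n)) ×ˢ
            powersetCard (t i) (univ : Finset (Fin n))),
            ENNReal.ofReal (Real.exp (-(4 * L * s))) := by
          refine Finset.sum_le_sum fun P hP => ?_
          rw [Finset.mem_product, Finset.mem_powersetCard, Finset.mem_powersetCard] at hP
          refine (graphM_ne n q α hα hsum p h0 h1 i _).trans (ENNReal.ofReal_le_ofReal ?_)
          rw [Finset.card_product, hP.1.2, hP.2.2]
          push_cast
          exact Real.exp_le_exp.2 (by linarith)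
      _ = ENNReal.ofReal ((n.choose s : ℝ) * (n.choose (t i) : ℝ) * Real.exp (-(4 * L * s))) := by
          rw [ENNReal.ofReal_mul (by positivity), ENNReal.ofReal_mul (by positivity)]
          simp [Finset.card_product]
      _ ≤ _ := by
          refine ENNReal.ofReal_le_ofReal ?_
          calc _ ≤ Real.exp (L * s) * Real.exp (L * s) * Real.exp (-(4 * L * s)) := by
                gcongr
                · exact choose_bd n s s β hβ hβ1 hsβ le_rfl
                · exact choose_bd n (t i) s β hβ hβ1 hsβ (ht i)
            _ = Real.exp (-(2 * L * s)) := by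
                rw [← Real.exp_add, ← Real.exp_add]; congr 1; ring
            _ ≤ _ := Real.exp_le_exp.2 (by
                have : (s:ℝ) ≤ L * s := le_mul_of_one_le_left (by positivity) hL1
                linarith)
  calc _ ≤ ∑ i : Fin q, ENNReal.ofReal (Real.exp (-(2 * β * n))) := Finset.sum_le_sum fun i _ => hi i
    _ = _ := by
      rw [ENNReal.ofReal_mul (by positivity)]
      simp

/-- Lemma 2(d): with `γ_d = (4/αᵢ) log(e/β)`, w.h.p. there are no color `i` and
sets `S ⊆ A`, `T ⊆ B` with `|S|, |T| ≥ βn` such that more than `γ_d n/log n` vertices of `T`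
have no `cᵢ`-neighbor in `S`. -/
theorem lemma_d (q : ℕ) (hq : 1 ≤ q) (α : Fin q → ℝ)
    (hα : ∀ i, 0 < α i) (hsum : ∑ i, α i = 1)
    (β : ℝ) (hβ : 0 < β) (hβq : β < 1 / q)
    (w : ℕ → ℝ) (hw : Tendsto w atTop atTop)
    (hwo : w =o[atTop] fun n => Real.log n) :
    Tendsto (fun n =>
      graphM n q α ((Real.log n + w n) / n)
        {f | ¬ ∃ (i : Fin q) (S T : Finset (Fin n)),
          β * n ≤ (S.card : ℝ) ∧ β * n ≤ (T.card : ℝ) ∧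
          4 / α i * Real.log (Real.exp 1 / β) * n / Real.log n <
            ((T.filter fun b => ∀ a ∈ S, f (a, b) ≠ some i).card : ℝ)})
      atTop (nhds 1) := by
  have hβ1 : β ≤ 1 := by
    refine hβq.le.trans ?_
    rw [div_le_one (by positivity)]
    exact_mod_cast hq
  have hcast : Tendsto (fun n : ℕ => (n : ℝ)) atTop atTop := tendsto_natCast_atTop_atTop
  have hlog : Tendsto (fun n : ℕ => Real.log n) atTop atTop := Real.tendsto_log_atTop.comp hcast
  have hlo : (fun n : ℕ => Real.log n) =o[atTop] fun n : ℕ => (n : ℝ) :=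
    Real.isLittleO_log_id_atTop.comp_tendsto hcast
  have hT : ∀ᶠ n : ℕ in atTop, ∀ i,
      ⌈4 / α i * Real.log (Real.exp 1 / β) * n / Real.log n⌉₊ ≤ ⌈β * n⌉₊ := by
    rw [eventually_all]
    intro i
    filter_upwards [hlog.eventually_ge_atTop (4 / α i * Real.log (Real.exp 1 / β) / β),
      hlog.eventually_gt_atTop 0] with n h1 h2
    refine Nat.ceil_le_ceil ?_
    rw [div_le_iff₀ hβ] at h1
    rw [div_le_iff₀ h2]
    have : (0:ℝ) ≤ n := by positivity
    nlinarith
  have hbd : ∀ᶠ n : ℕ in atTop, 1 - ENNReal.ofReal (q * Real.exp (-(2 * β * n))) ≤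
      graphM n q α ((Real.log n + w n) / n)
        {f | ¬ ∃ (i : Fin q) (S T : Finset (Fin n)),
          β * n ≤ (S.card : ℝ) ∧ β * n ≤ (T.card : ℝ) ∧
          4 / α i * Real.log (Real.exp 1 / β) * n / Real.log n <
            ((T.filter fun b => ∀ a ∈ S, f (a, b) ≠ some i).card : ℝ)} ∧
      graphM n q α ((Real.log n + w n) / n)
        {f | ¬ ∃ (i : Fin q) (S T : Finset (Fin n)),
          β * n ≤ (S.card : ℝ) ∧ β * n ≤ (T.card : ℝ) ∧
          4 / α i * Real.log (Real.exp 1 / β) * n / Real.log n <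
            ((T.filter fun b => ∀ a ∈ S, f (a, b) ≠ some i).card : ℝ)} ≤ 1 := by
    filter_upwards [hT, eventually_gt_atTop 0, hlog.eventually_gt_atTop 0,
      hw.eventually_ge_atTop 0, hwo.bound one_pos, hlo.bound (c := 1 / 2) (by norm_num)]
      with n hT hn hl hw0 hwl hln
    have hn' : (0:ℝ) < n := by exact_mod_cast hn
    rw [Real.norm_of_nonneg hw0, Real.norm_of_nonneg hl.le] at hwl
    rw [Real.norm_of_nonneg hn'.le, Real.norm_of_nonneg hl.le] at hln
    have hp0 : 0 ≤ (Real.log n + w n) / n := by positivity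
    have hp1 : (Real.log n + w n) / n ≤ 1 := by
      rw [div_le_one hn']; linarith
    have hP := colorM_prob q α hα hsum _ hp0 hp1
    have hG : IsProbabilityMeasure (graphM n q α ((Real.log n + w n) / n)) := by
      unfold graphM; infer_instance
    refine ⟨?_, prob_le_one⟩
    have hb := bad_bd n q α hα hsum β hβ hβ1 _ hp0 hp1 hn hl (by gcongr; linarith) hT
    have hms : MeasurableSingletonClass (Option (Fin q)) := ⟨fun _ => trivial⟩
    rw [← Set.compl_ofPred, prob_compl_eq_one_sub (Set.toFinite _).measurableSet]
    exact tsub_le_tsub_left hb 1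
  have hlim : Tendsto (fun n : ℕ => 1 - ENNReal.ofReal (q * Real.exp (-(2 * β * n)))) atTop
      (nhds 1) := by
    have h1 : Tendsto (fun n : ℕ => (q:ℝ) * Real.exp (-(2 * β * n))) atTop (nhds (q * 0)) := by
      refine Tendsto.const_mul _ (Real.tendsto_exp_neg_atTop_nhds_zero.comp ?_)
      exact hcast.const_mul_atTop (by positivity)
    have h2 := ENNReal.tendsto_ofReal h1
    have h3 := ENNReal.Tendsto.sub (tendsto_const_nhds (x := (1:ENNReal)) (f := atTop)) h2
      (Or.inl ENNReal.one_ne_top)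
    simpa using h3
  exact tendsto_of_tendsto_of_tendsto_of_le_of_le' hlim tendsto_const_nhds
    (hbd.mono fun _ h => h.1) (hbd.mono fun _ h => h.2)
end

section
/- With high probability there do not exist a color i ∈ [q] and sets S ⊆ A, T ⊆ B with |S|, |T| ≥ βn/10 such that e_i(S,T) = 0. -/
open MeasureTheory Filter Finset Asymptotics

theorem colorM_univ (q : ℕ) (α : Fin q → ℝ) (hα : ∀ i, 0 < α i) (hsum : ∑ i, α i = 1)
    (p : ℝ) (hp0 : 0 ≤ p) (hp1 : p ≤ 1) : colorM q α p Set.univ = 1 := by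
  simp only [colorM, Measure.coe_add, Pi.add_apply, Measure.smul_apply, Measure.finsetSum_apply,
    measure_univ, smul_eq_mul, mul_one]
  rw [← ENNReal.ofReal_sum_of_nonneg (fun i _ => mul_nonneg (hα i).le hp0), ← Finset.sum_mul, hsum,
    ← ENNReal.ofReal_add (by linarith) (by linarith)]
  simp

theorem colorM_some (q : ℕ) (α : Fin q → ℝ) (p : ℝ) (i : Fin q) :
    colorM q α p {some i} = ENNReal.ofReal (α i * p) := by
  simp only [colorM, Measure.coe_add, Pi.add_apply, Measure.smul_apply, Measure.finsetSum_apply,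
    smul_eq_mul]
  rw [Finset.sum_eq_single i]
  · simp
  · intro b _ hb
    simp [hb]
  · simp

theorem bad_bound (n q : ℕ) (α : Fin q → ℝ) (hα : ∀ i, 0 < α i) (hsum : ∑ i, α i = 1)
    (p : ℝ) (hp0 : 0 ≤ p) (hp1 : p ≤ 1) (i : Fin q) (S T : Finset (Fin n)) :
    graphM n q α p {f | ((S ×ˢ T).filter fun e => f e = some i).card = 0}
      ≤ ENNReal.ofReal (Real.exp (-(α i * p * (S.card * T.card)))) := by
  haveI : IsProbabilityMeasure (colorM q α p) := ⟨colorM_univ q α hα hsum p hp0 hp1⟩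
  have hset : {f : Fin n × Fin n → Option (Fin q) |
      ((S ×ˢ T).filter fun e => f e = some i).card = 0}
      = Set.pi Set.univ (fun e => if e ∈ S ×ˢ T then {some i}ᶜ else Set.univ) := by
    ext f
    simp only [Set.mem_setOf_eq, Finset.card_eq_zero, Finset.filter_eq_empty_iff, Set.mem_pi,
      Set.mem_univ, true_imp_iff]
    refine forall_congr' fun e => ?_
    by_cases h : e ∈ S ×ˢ T <;> simp [h]
  have h1 : colorM q α p {some i}ᶜ ≤ ENNReal.ofReal (Real.exp (-(α i * p))) := by
    rw [prob_compl_eq_one_sub (by trivial), colorM_some, ← ENNReal.ofReal_one,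
      ← ENNReal.ofReal_sub _ (mul_nonneg (hα i).le hp0)]
    apply ENNReal.ofReal_le_ofReal
    have := Real.add_one_le_exp (-(α i * p))
    linarith
  rw [hset, graphM, Measure.pi_pi]
  have h2 : ∀ e : Fin n × Fin n, colorM q α p (if e ∈ S ×ˢ T then {some i}ᶜ else Set.univ)
      = if e ∈ S ×ˢ T then colorM q α p {some i}ᶜ else 1 := by
    intro e
    split_ifs <;> simp
  simp only [h2]
  rw [Finset.prod_ite_mem, Finset.univ_inter, Finset.prod_const, Finset.card_product]
  refine (pow_le_pow_left' h1 _).trans ?_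
  rw [← ENNReal.ofReal_pow (Real.exp_pos _).le, ← Real.exp_nat_mul]
  apply le_of_eq
  congr 2
  push_cast
  ring

/-- Lemma 2(f): w.h.p. there are no color `i` and sets `S ⊆ A`, `T ⊆ B` with
`|S|, |T| ≥ βn/10` spanning no edge of color `cᵢ`. -/
theorem lemma_f (q : ℕ) (hq : 1 ≤ q) (α : Fin q → ℝ)
    (hα : ∀ i, 0 < α i) (hsum : ∑ i, α i = 1)
    (β : ℝ) (hβ : 0 < β) (hβq : β < 1 / q)
    (w : ℕ → ℝ) (hw : Tendsto w atTop atTop)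
    (hwo : w =o[atTop] fun n => Real.log n) :
    Tendsto (fun n =>
      graphM n q α ((Real.log n + w n) / n)
        {f | ¬ ∃ (i : Fin q) (S T : Finset (Fin n)),
          β * n / 10 ≤ (S.card : ℝ) ∧ β * n / 10 ≤ (T.card : ℝ) ∧
          ((S ×ˢ T).filter fun e => f e = some i).card = 0})
      atTop (nhds 1) := by
  haveI : Nonempty (Fin q) := ⟨⟨0, hq⟩⟩
  obtain ⟨i0, hi0⟩ := Finite.exists_min α
  set c : ℝ := α i0 * (β / 10) ^ 2 with hc
  have hcpos : 0 < c := mul_pos (hα i0) (by positivity)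
  have hlog : Tendsto (fun n : ℕ => Real.log n) atTop atTop :=
    Real.tendsto_log_atTop.comp tendsto_natCast_atTop_atTop
  have hlogn : Tendsto (fun n : ℕ => Real.log n / n) atTop (nhds 0) := by
    have := (Real.isLittleO_log_id_atTop.tendsto_div_nhds_zero).comp
      (tendsto_natCast_atTop_atTop (R := ℝ))
    exact this
  have hq_lim : Tendsto (fun n : ℕ => ENNReal.ofReal (q * Real.exp (-(n : ℝ)))) atTop (nhds 0) := by
    rw [← ENNReal.ofReal_zero]
    apply ENNReal.tendsto_ofReal
    have := (Real.tendsto_exp_neg_atTop_nhds_zero.comp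
      (tendsto_natCast_atTop_atTop (R := ℝ))).const_mul (q : ℝ)
    simpa using this
  have hlow : Tendsto (fun n : ℕ => 1 - ENNReal.ofReal (q * Real.exp (-(n : ℝ)))) atTop
      (nhds 1) := by
    have := ENNReal.Tendsto.sub (tendsto_const_nhds (x := (1 : ENNReal)) (f := (atTop : Filter ℕ)))
      hq_lim (Or.inl ENNReal.one_ne_top)
    simpa using this
  have hp : ∀ᶠ n : ℕ in atTop, 1 ≤ n ∧ 0 ≤ Real.log n ∧ 0 ≤ w n ∧ w n ≤ Real.log n ∧
      Real.log n / n ≤ 1 / 2 ∧ (Real.log 4 + 1) / c ≤ Real.log n := by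
    have e1 := hwo.bound one_pos
    filter_upwards [eventually_ge_atTop 1, hlog.eventually_ge_atTop 0, hw.eventually_ge_atTop 0, e1,
      hlogn.eventually_le_const (show (0 : ℝ) < 1 / 2 by norm_num),
      hlog.eventually_ge_atTop ((Real.log 4 + 1) / c)] with n h1 h2 h3 h4 h5 h6
    refine ⟨h1, h2, h3, ?_, h5, h6⟩
    rw [Real.norm_of_nonneg h3, Real.norm_of_nonneg h2] at h4
    linarith
  have key : ∀ᶠ n : ℕ in atTop,
      (1 - ENNReal.ofReal (q * Real.exp (-(n : ℝ))) ≤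
      graphM n q α ((Real.log n + w n) / n)
        {f | ¬ ∃ (i : Fin q) (S T : Finset (Fin n)),
          β * n / 10 ≤ (S.card : ℝ) ∧ β * n / 10 ≤ (T.card : ℝ) ∧
          ((S ×ˢ T).filter fun e => f e = some i).card = 0}) ∧
      graphM n q α ((Real.log n + w n) / n)
        {f | ¬ ∃ (i : Fin q) (S T : Finset (Fin n)),
          β * n / 10 ≤ (S.card : ℝ) ∧ β * n / 10 ≤ (T.card : ℝ) ∧
          ((S ×ˢ T).filter fun e => f e = some i).card = 0} ≤ 1 := by
    filter_upwards [hp] with n ⟨hn, hl, hw0, hwl, hll, hlc⟩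
    have hn0 : (0 : ℝ) < n := by exact_mod_cast hn
    set p : ℝ := (Real.log n + w n) / n with hpdef
    have hp0 : 0 ≤ p := by positivity
    have hp1 : p ≤ 1 := by
      have : p ≤ 2 * (Real.log n / n) := by
        rw [hpdef, ← mul_div_assoc]
        gcongr
        linarith
      linarith
    have hpl : Real.log n ≤ p * n := by
      rw [hpdef, div_mul_cancel₀ _ hn0.ne']
      linarith
    haveI : IsProbabilityMeasure (colorM q α p) := ⟨colorM_univ q α hα hsum p hp0 hp1⟩
    haveI : IsProbabilityMeasure (graphM n q α p) := by unfold graphM; infer_instance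
    refine ⟨?_, prob_le_one⟩
    set bad : Set (Fin n × Fin n → Option (Fin q)) := {f | ∃ (i : Fin q) (S T : Finset (Fin n)),
          β * n / 10 ≤ (S.card : ℝ) ∧ β * n / 10 ≤ (T.card : ℝ) ∧
          ((S ×ˢ T).filter fun e => f e = some i).card = 0} with hbad
    haveI : DiscreteMeasurableSpace (Option (Fin q)) := ⟨fun _ => trivial⟩
    have hmeas : MeasurableSet bad := MeasurableSet.of_discrete
    change _ ≤ graphM n q α p badᶜ
    rw [prob_compl_eq_one_sub hmeas]
    apply tsub_le_tsub_left
    have hsub : bad ⊆ ⋃ x : Fin q × Finset (Fin n) × Finset (Fin n),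
        {f | β * n / 10 ≤ (x.2.1.card : ℝ) ∧ β * n / 10 ≤ (x.2.2.card : ℝ) ∧
          ((x.2.1 ×ˢ x.2.2).filter fun e => f e = some x.1).card = 0} := by
      rintro f ⟨i, S, T, h⟩
      exact Set.mem_iUnion.2 ⟨(i, S, T), h⟩
    refine (measure_mono hsub).trans ((measure_iUnion_fintype_le _ _).trans ?_)
    have hone : ∀ x : Fin q × Finset (Fin n) × Finset (Fin n), graphM n q α p
        {f | β * n / 10 ≤ (x.2.1.card : ℝ) ∧ β * n / 10 ≤ (x.2.2.card : ℝ) ∧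
          ((x.2.1 ×ˢ x.2.2).filter fun e => f e = some x.1).card = 0} ≤
        ENNReal.ofReal (Real.exp (-(c * n * Real.log n))) := by
      rintro ⟨i, S, T⟩
      by_cases h : β * n / 10 ≤ (S.card : ℝ) ∧ β * n / 10 ≤ (T.card : ℝ)
      · refine (measure_mono (fun f hf => hf.2.2)).trans
          ((bad_bound n q α hα hsum p hp0 hp1 i S T).trans ?_)
        apply ENNReal.ofReal_le_ofReal
        apply Real.exp_le_exp.2
        apply neg_le_neg
        have h1 : (β * n / 10) * (β * n / 10) ≤ (S.card : ℝ) * T.card :=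
          mul_le_mul h.1 h.2 (by positivity) (by positivity)
        have h2 : α i0 * p ≤ α i * p := mul_le_mul_of_nonneg_right (hi0 i) hp0
        calc c * n * Real.log n ≤ c * n * (p * n) := by gcongr
          _ = α i0 * p * ((β * n / 10) * (β * n / 10)) := by rw [hc]; ring
          _ ≤ _ := mul_le_mul h2 h1 (by positivity) (mul_nonneg (hα i).le hp0)
      · have : {f : Fin n × Fin n → Option (Fin q) |
          β * n / 10 ≤ (S.card : ℝ) ∧ β * n / 10 ≤ (T.card : ℝ) ∧
          ((S ×ˢ T).filter fun e => f e = some i).card = 0} = ∅ := by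
          ext f
          simp only [Set.mem_setOf_eq, Set.mem_empty_iff_false, iff_false]
          exact fun hf => h ⟨hf.1, hf.2.1⟩
        simp only [this, measure_empty, zero_le]
    refine (Finset.sum_le_sum (fun x _ => hone x)).trans ?_
    rw [Finset.sum_const, nsmul_eq_mul, Finset.card_univ, ← ENNReal.ofReal_natCast,
      ← ENNReal.ofReal_mul (by positivity)]
    apply ENNReal.ofReal_le_ofReal
    have hcard : ((Fintype.card (Fin q × Finset (Fin n) × Finset (Fin n)) : ℕ) : ℝ)
        = q * Real.exp (n * Real.log 4) := by
      rw [Real.exp_nat_mul, Real.exp_log (by norm_num)]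
      simp only [Fintype.card_prod, Fintype.card_fin, Fintype.card_finset]
      push_cast
      rw [← mul_pow]
      norm_num
    rw [hcard, mul_assoc, ← Real.exp_add]
    apply mul_le_mul_of_nonneg_left _ (by positivity)
    apply Real.exp_le_exp.2
    rw [div_le_iff₀ hcpos] at hlc
    nlinarith
  exact tendsto_of_tendsto_of_tendsto_of_le_of_le' hlow tendsto_const_nhds
    (key.mono fun n h => h.1) (key.mono fun n h => h.2)
end
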